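/- arXiv:2402.03087 — 2 statements merged into one kernel-verified Lean document; each statement's English description precedes it below -/
import Mathlib

section
/- Let G=(V,E) be an undirected graph with a positive integer weight w(e) on each edge and a positive integer target t(v) for each vertex. Construct a graph H as follows: start from the vertex set V; for each edge e = {x,y} of weight γ = w(e), add new vertices a_e and b_e joined by an edge, add γ internally disjoint paths from x to a_e each with exactly two new internal vertices, and add γ internally disjoint paths from b_e to y each with exactly two new internal vertices (all gadget vertices for distinct edges are distinct and new); finally, add to each original vertex v ∈ V one new pendant neighbour. Set capacities: every new vertex gets capacity equal to its degree in H, and every original vertex v ∈ V gets capacity t(v)+1. Then H has a capacitated vertex cover of size at most |V| + Σ_{e∈E}(2·w(e)+1) if and only if G has an orientation in which every vertex v has weighted outdegree at most t(v). -/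
/-!
The Capacitated Vertex Cover gadget construction.

The input graph `G` is given by a finite vertex type `V` and an arc set
`A : Finset (V × V)` listing each undirected edge exactly once as an ordered pair
(loopless, and never both orientations), with positive weights `w` and positive
targets `t`.

The graph `H` has vertex type `CVCV V`:
* `Sum.inl (Sum.inl x)` is the original vertex `x`;
* `Sum.inl (Sum.inr x)` is the pendant neighbour added to `x`;
* for each edge `e = (x,y)`, `Sum.inr (e, Sum.inl false) = a_e` and
  `Sum.inr (e, Sum.inl true) = b_e` (joined by an edge), and
  `Sum.inr (e, Sum.inr (side, j, pos))` is the internal vertex at position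
  `pos : Fin 2` of the `j`-th path on side `side` (`false`: the paths
  `x - u₀ - u₁ - a_e`; `true`: the paths `b_e - u₀ - u₁ - y`).
The vertex set of `H` is `cvcVset A w` (path indices `j < w e`).

Edges of `H` are represented (each exactly once) by ordered pairs satisfying the
base relation `cvcBase`; an edge assignment is a function `g` to `Bool` choosing
for an edge `p` its first endpoint (if `g p = true`) or its second.

Capacities: every new vertex gets its degree (`1` for pendants, `2` for internal
path vertices, `w e + 1` for `a_e` and `b_e`), and original vertices get `t v + 1`.

An orientation of `G` is a function `o : V × V → Bool`; `o e = true` means edge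
`e` is directed from `e.1` to `e.2`.
-/

open Finset

/-- Gadget vertices for one edge. -/
abbrev CVCGad := Bool ⊕ (Bool × ℕ × Fin 2)

/-- Vertices of the constructed graph `H`. -/
abbrev CVCV (V : Type*) := (V ⊕ V) ⊕ ((V × V) × CVCGad)

/-- Base adjacency within one edge gadget (each gadget-internal edge listed once). -/
def cvcGadBase : CVCGad → CVCGad → Prop
  | Sum.inl s, Sum.inl s' => s = false ∧ s' = true
  | Sum.inl s, Sum.inr (s', _, p) =>
      s = s' ∧ ((s = false ∧ (p : ℕ) = 1) ∨ (s = true ∧ (p : ℕ) = 0))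
  | Sum.inr (s, j, p), Sum.inr (s', j', p') =>
      s = s' ∧ j = j' ∧ (p : ℕ) = 0 ∧ (p' : ℕ) = 1
  | _, _ => False

/-- Base adjacency relation of `H`; every edge of `H` is represented by exactly
one ordered pair satisfying this relation. -/
def cvcBase {V : Type*} : CVCV V → CVCV V → Prop
  | Sum.inl (Sum.inl x), Sum.inl (Sum.inr x') => x = x'
  | Sum.inl (Sum.inl x), Sum.inr (e, Sum.inr (false, _, p)) => x = e.1 ∧ (p : ℕ) = 0
  | Sum.inl (Sum.inl y), Sum.inr (e, Sum.inr (true, _, p)) => y = e.2 ∧ (p : ℕ) = 1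
  | Sum.inr (e, g), Sum.inr (e', g') => e = e' ∧ cvcGadBase g g'
  | _, _ => False

/-- The vertex set of `H`. -/
def cvcVset {V : Type*} (A : Finset (V × V)) (w : V × V → ℕ) : Set (CVCV V) :=
  {u | match u with
       | Sum.inl _ => True
       | Sum.inr (e, Sum.inl _) => e ∈ A
       | Sum.inr (e, Sum.inr (_, j, _)) => e ∈ A ∧ j < w e}

/-- The edge set of `H`, each edge represented by one ordered pair. -/
def cvcEdges {V : Type*} (A : Finset (V × V)) (w : V × V → ℕ) :
    Set (CVCV V × CVCV V) :=
  {p | p.1 ∈ cvcVset A w ∧ p.2 ∈ cvcVset A w ∧ cvcBase p.1 p.2}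

/-- The capacities of the vertices of `H`. -/
def cvcCap {V : Type*} (w : V × V → ℕ) (t : V → ℕ) : CVCV V → ℕ
  | Sum.inl (Sum.inl v) => t v + 1
  | Sum.inl (Sum.inr _) => 1
  | Sum.inr (e, Sum.inl _) => w e + 1
  | Sum.inr (_, Sum.inr _) => 2

/-!
The pendant edges, the edges `a_e b_e` and the middle edges of the paths form a perfect matching of
`H` with exactly `|V| + ∑ (2 w e + 1)` edges, so a cover of that size contains exactly one endpoint
of each of them. In particular `a_e` or `b_e` is missing; covering the edges at the missing one
takes the inner vertex of every path on its side, so the outer vertices of these paths are missing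
too and the original endpoint on that side has to pay for `w e` edges. Orient `e` out of that
endpoint. An original vertex in the cover pays for its pendant edge as well, which uses up the extra
unit of capacity. Conversely, an orientation prescribes one endpoint of each matching edge, and new
vertices are never overloaded because their capacity is their degree.
-/

section Selection

variable {U : Type*} {E : Set (U × U)} {c : U → ℕ} {S : Set U} {g : U × U → Bool} {p : U × U}
  {v : U}

/-- The endpoint of the ordered pair `p` selected by `g`. For an edge assignment this is the
endpoint that `p` is assigned to, for an orientation it is the tail of `p`. -/
def selectedEnd (g : U × U → Bool) (p : U × U) : U :=
  if g p = true then p.1 else p.2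

theorem selectedEnd_eq_iff :
    selectedEnd g p = v ↔ (g p = true ∧ p.1 = v) ∨ (g p = false ∧ p.2 = v) := by
  cases h : g p <;> simp [selectedEnd, h]

theorem selectedEnd_mem_iff :
    selectedEnd g p ∈ S ↔ if g p = true then p.1 ∈ S else p.2 ∈ S :=
  iff_of_eq (apply_ite (· ∈ S) _ _ _)

/-- The edges in `E` that the edge assignment `g` assigns to the vertex `v`. -/
def assignedEdges (E : Set (U × U)) (g : U × U → Bool) (v : U) : Set (U × U) :=
  {p | p ∈ E ∧ selectedEnd g p = v}

/-- The edges in `E` incident to the vertex `v`. -/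
def incidentEdges (E : Set (U × U)) (v : U) : Set (U × U) :=
  {p | p ∈ E ∧ (p.1 = v ∨ p.2 = v)}

theorem assignedEdges_subset_incidentEdges : assignedEdges E g v ⊆ incidentEdges E v :=
  fun _ ⟨hp, hv⟩ => ⟨hp, (selectedEnd_eq_iff.1 hv).imp And.right And.right⟩

theorem ncard_assignedEdges_le_ncard_incidentEdges (hE : E.Finite) :
    (assignedEdges E g v).ncard ≤ (incidentEdges E v).ncard :=
  Set.ncard_le_ncard assignedEdges_subset_incidentEdges (hE.subset fun _ hp => hp.1)

/-- `S` is a vertex cover of the graph with edge set `E`. -/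
def CoversEdges (E : Set (U × U)) (S : Set U) : Prop :=
  ∀ p ∈ E, p.1 ∈ S ∨ p.2 ∈ S

/-- `S` with the edge assignment `g` is a capacitated vertex cover, for the capacities `c`, of the
graph with edge set `E`. -/
structure IsCapacitatedCover (E : Set (U × U)) (c : U → ℕ) (S : Set U) (g : U × U → Bool) :
    Prop where
  selectedEnd_mem : ∀ p ∈ E, selectedEnd g p ∈ S
  ncard_assignedEdges_le : ∀ v ∈ S, (assignedEdges E g v).ncard ≤ c v

theorem isCapacitatedCover_iff :
    IsCapacitatedCover E c S g ↔ (∀ p ∈ E, selectedEnd g p ∈ S) ∧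
      ∀ v ∈ S, (assignedEdges E g v).ncard ≤ c v :=
  ⟨fun h => ⟨h.1, h.2⟩, fun h => ⟨h.1, h.2⟩⟩

theorem IsCapacitatedCover.coversEdges (h : IsCapacitatedCover E c S g) : CoversEdges E S := by
  intro p hp
  have := selectedEnd_mem_iff.1 (h.selectedEnd_mem p hp)
  split_ifs at this
  exacts [.inl this, .inr this]

theorem IsCapacitatedCover.selectedEnd_eq_fst (h : IsCapacitatedCover E c S g) (hp : p ∈ E)
    (hpS : p.2 ∉ S) : selectedEnd g p = p.1 := by
  have := selectedEnd_mem_iff.1 (h.selectedEnd_mem p hp)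
  split_ifs at this with hg
  exacts [if_pos hg, absurd this hpS]

open Classical in
/-- The edge assignment that prefers the second endpoint whenever it belongs to `S`. -/
noncomputable def sndAssignment (S : Set U) (p : U × U) : Bool :=
  decide (p.2 ∉ S)

theorem selectedEnd_sndAssignment_eq_iff :
    selectedEnd (sndAssignment S) p = v ↔ (p.2 ∉ S ∧ p.1 = v) ∨ (p.2 ∈ S ∧ p.2 = v) := by
  simp [selectedEnd_eq_iff, sndAssignment]

theorem CoversEdges.selectedEnd_sndAssignment_mem (h : CoversEdges E S) (hp : p ∈ E) :
    selectedEnd (sndAssignment S) p ∈ S := by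
  by_cases hpS : p.2 ∈ S
  · rwa [selectedEnd_sndAssignment_eq_iff.2 (.inr ⟨hpS, rfl⟩)]
  · rw [selectedEnd_sndAssignment_eq_iff.2 (.inl ⟨hpS, rfl⟩)]
    exact (h p hp).resolve_right hpS

theorem CoversEdges.injOn_of_ncard_le_card_matching {ι : Type*} {M : Finset ι} {m : ι → U × U}
    {φ : U → ι} (h : CoversEdges E S) (hm : ∀ i ∈ M, m i ∈ E) (hfst : ∀ i, φ (m i).1 = i)
    (hsnd : ∀ i, φ (m i).2 = i) (hφ : Set.MapsTo φ S M) (hS : S.Finite)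
    (hcard : S.ncard ≤ M.card) : Set.InjOn φ S := by
  have hsurj (i : ι) (hi : i ∈ (M : Set ι)) : ∃ u, ∃ _ : u ∈ S, φ u = i := by
    rcases h (m i) (hm i hi) with hu | hu
    exacts [⟨_, hu, hfst i⟩, ⟨_, hu, hsnd i⟩]
  intro u hu u' hu' huu'
  exact Set.inj_on_of_surj_on_of_ncard_le (fun u _ => φ u) (fun _ hu => hφ hu)
    (fun i hi => by simpa [eq_comm] using hsurj i hi)
    (by rwa [Set.ncard_coe_finset]) hu hu' huu' hS

/-- The weighted outdegree of `v` in the orientation `o` of the graph with edges `A`. -/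
def outWeight [DecidableEq U] (A : Finset (U × U)) (w : U × U → ℕ) (o : U × U → Bool) (v : U) : ℕ :=
  ∑ e ∈ A with selectedEnd o e = v, w e

theorem outWeight_eq_sum [DecidableEq U] {A : Finset (U × U)} {w : U × U → ℕ}
    {o : U × U → Bool} :
    outWeight A w o v =
      ∑ e ∈ A with (e.1 = v ∧ o e = true) ∨ (e.2 = v ∧ o e = false), w e := by
  simp only [outWeight, selectedEnd_eq_iff, and_comm]

end Selection

section Gadget

variable {V : Type*} {A : Finset (V × V)} {w : V × V → ℕ} {e : V × V} {o : V × V → Bool}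

/-- The vertex of `H` given by the vertex `v` of `G`. -/
abbrev cvcOrig (v : V) : CVCV V := Sum.inl (Sum.inl v)

/-- The pendant neighbour of `cvcOrig v`. -/
abbrev cvcPendant (v : V) : CVCV V := Sum.inl (Sum.inr v)

/-- The vertex `a_e` (`s = false`) or `b_e` (`s = true`). -/
abbrev cvcHub (e : V × V) (s : Bool) : CVCV V := Sum.inr (e, Sum.inl s)

/-- The internal vertices of the `j`-th path on side `s`, with the position in `Fin 2` encoded by
`b : Bool`. The vertex with `b = s` is the outer one, adjacent to an original vertex; the vertex
with `b = !s` is the inner one, adjacent to `cvcHub e s`. -/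
abbrev cvcPath (e : V × V) (s : Bool) (j : ℕ) (b : Bool) : CVCV V :=
  Sum.inr (e, Sum.inr (s, j, cond b 1 0))

/-- The endpoint of `e` at which the paths on side `s` end. -/
def cvcSideEnd (e : V × V) (s : Bool) : V := cond s e.2 e.1

theorem cvcSideEnd_not : cvcSideEnd e (!o e) = selectedEnd o e := by
  cases h : o e <;> simp [cvcSideEnd, selectedEnd, h]

/-- The edge joining the `j`-th path on side `s` to an original vertex. -/
abbrev cvcSpoke (e : V × V) (s : Bool) (j : ℕ) : CVCV V × CVCV V :=
  (cvcOrig (cvcSideEnd e s), cvcPath e s j s)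

theorem exists_cvcPath_eq (e : V × V) (s : Bool) (j : ℕ) (p : Fin 2) :
    ∃ b, Sum.inr (e, Sum.inr (s, j, p)) = cvcPath e s j b := by
  fin_cases p
  exacts [⟨false, rfl⟩, ⟨true, rfl⟩]

@[elab_as_elim]
theorem cvcV_cases {P : CVCV V → Prop} (orig : ∀ v, P (cvcOrig v))
    (pendant : ∀ v, P (cvcPendant v)) (hub : ∀ e s, P (cvcHub e s))
    (path : ∀ e s j b, P (cvcPath e s j b)) (u : CVCV V) : P u := by
  rcases u with (v | v) | ⟨e, s | ⟨s, j, p⟩⟩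
  · exact orig v
  · exact pendant v
  · exact hub e s
  · obtain ⟨b, hb⟩ := exists_cvcPath_eq e s j p
    exact hb ▸ path e s j b

/-- The five kinds of edges of `H`. -/
inductive IsGadgetEdge (A : Finset (V × V)) (w : V × V → ℕ) : CVCV V × CVCV V → Prop
  | pendant (v : V) : IsGadgetEdge A w (cvcOrig v, cvcPendant v)
  | hubs (e : V × V) (he : e ∈ A) : IsGadgetEdge A w (cvcHub e false, cvcHub e true)
  | middle (e : V × V) (s : Bool) (j : ℕ) (he : e ∈ A) (hj : j < w e) :
      IsGadgetEdge A w (cvcPath e s j false, cvcPath e s j true)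
  | inner (e : V × V) (s : Bool) (j : ℕ) (he : e ∈ A) (hj : j < w e) :
      IsGadgetEdge A w (cvcHub e s, cvcPath e s j (!s))
  | spoke (e : V × V) (s : Bool) (j : ℕ) (he : e ∈ A) (hj : j < w e) :
      IsGadgetEdge A w (cvcSpoke e s j)

theorem IsGadgetEdge.mem_cvcEdges {p : CVCV V × CVCV V} (h : IsGadgetEdge A w p) :
    p ∈ cvcEdges A w := by
  cases h with
  | pendant v => simp [cvcEdges, cvcVset, cvcBase]
  | hubs e he => simp [cvcEdges, cvcVset, cvcBase, cvcGadBase, he]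
  | middle e s j he hj => simp [cvcEdges, cvcVset, cvcBase, cvcGadBase, he, hj]
  | inner e s j he hj => cases s <;> simp [cvcEdges, cvcVset, cvcBase, cvcGadBase, he, hj]
  | spoke e s j he hj => cases s <;> simp [cvcEdges, cvcVset, cvcBase, cvcSideEnd, he, hj]

theorem isGadgetEdge_of_mem_cvcEdges {p : CVCV V × CVCV V} (h : p ∈ cvcEdges A w) :
    IsGadgetEdge A w p := by
  obtain ⟨u, u'⟩ := p
  obtain ⟨-, hu', hadj⟩ := h
  induction u using cvcV_cases with
  | orig v =>
    induction u' using cvcV_cases with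
    | orig v' => exact hadj.elim
    | pendant v' =>
      obtain rfl : v = v' := hadj
      exact .pendant v
    | hub e s => exact hadj.elim
    | path e s j b =>
      obtain ⟨rfl, rfl⟩ : v = cvcSideEnd e s ∧ b = s := by
        cases s <;> cases b <;> simp_all [cvcBase, cvcSideEnd]
      exact .spoke e b j hu'.1 hu'.2
  | pendant v => exact hadj.elim
  | hub e s =>
    induction u' using cvcV_cases with
    | orig v' => exact hadj.elim
    | pendant v' => exact hadj.elim
    | hub e' s' =>
      obtain ⟨rfl, rfl, rfl⟩ := hadj
      exact .hubs e hu'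
    | path e' s' j b =>
      obtain ⟨rfl, rfl, hb⟩ := hadj
      obtain rfl : b = !s := by cases s <;> cases b <;> simp_all
      exact .inner e s j hu'.1 hu'.2
  | path e s j b =>
    induction u' using cvcV_cases with
    | orig v' => cases s <;> exact hadj.elim
    | pendant v' => cases s <;> exact hadj.elim
    | hub e' s' => exact hadj.2.elim
    | path e' s' j' b' =>
      obtain ⟨rfl, rfl, rfl, hb, hb'⟩ := hadj
      obtain ⟨rfl, rfl⟩ : b = false ∧ b' = true := by cases b <;> cases b' <;> simp_all
      exact .middle e s j hu'.1 hu'.2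

theorem mem_cvcEdges_iff {p : CVCV V × CVCV V} : p ∈ cvcEdges A w ↔ IsGadgetEdge A w p :=
  ⟨isGadgetEdge_of_mem_cvcEdges, IsGadgetEdge.mem_cvcEdges⟩

end Gadget

section Matching

variable {V : Type*} {A : Finset (V × V)} {w : V × V → ℕ}

/-- Indices of the perfect matching `cvcMatching` of `H`: original vertices for the pendant edges,
pairs `⟨e, none⟩` for the edges `a_e b_e`, and `⟨e, some (s, j)⟩` for the middle edge of the `j`-th
path on side `s` of the gadget of `e`. -/
abbrev CVCMatchIndex (V : Type*) := V ⊕ (Σ _ : V × V, Option (Bool × ℕ))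

/-- The perfect matching of `H` formed by the pendant edges, the edges `a_e b_e` and the middle
edges of the paths. -/
def cvcMatching : CVCMatchIndex V → CVCV V × CVCV V
  | Sum.inl v => (cvcOrig v, cvcPendant v)
  | Sum.inr ⟨e, none⟩ => (cvcHub e false, cvcHub e true)
  | Sum.inr ⟨e, some (s, j)⟩ => (cvcPath e s j false, cvcPath e s j true)

/-- The index of the edge of `cvcMatching` that contains the given vertex. -/
def cvcMatchIndex : CVCV V → CVCMatchIndex V
  | Sum.inl (Sum.inl v) => Sum.inl v
  | Sum.inl (Sum.inr v) => Sum.inl v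
  | Sum.inr (e, Sum.inl _) => Sum.inr ⟨e, none⟩
  | Sum.inr (e, Sum.inr (s, j, _)) => Sum.inr ⟨e, some (s, j)⟩

theorem cvcMatchIndex_cvcMatching_fst (i : CVCMatchIndex V) :
    cvcMatchIndex (cvcMatching i).1 = i := by
  rcases i with v | ⟨e, _ | ⟨s, j⟩⟩ <;> rfl

theorem cvcMatchIndex_cvcMatching_snd (i : CVCMatchIndex V) :
    cvcMatchIndex (cvcMatching i).2 = i := by
  rcases i with v | ⟨e, _ | ⟨s, j⟩⟩ <;> rfl

theorem eq_cvcMatching_fst_or_snd (u : CVCV V) :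
    u = (cvcMatching (cvcMatchIndex u)).1 ∨ u = (cvcMatching (cvcMatchIndex u)).2 := by
  induction u using cvcV_cases with
  | orig v => exact .inl rfl
  | pendant v => exact .inr rfl
  | hub e s => cases s <;> simp [cvcMatching, cvcMatchIndex]
  | path e s j b => cases b <;> simp [cvcMatching, cvcMatchIndex]

/-- The indices of the edges of `cvcMatching` that lie in `H`. -/
def cvcMatchIndices [Fintype V] (A : Finset (V × V)) (w : V × V → ℕ) :
    Finset (CVCMatchIndex V) :=
  univ.disjSum (A.sigma fun e => insertNone (univ ×ˢ range (w e)))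

theorem card_cvcMatchIndices [Fintype V] :
    (cvcMatchIndices A w).card = Fintype.card V + ∑ e ∈ A, (2 * w e + 1) := by
  simp [cvcMatchIndices, card_disjSum]

theorem cvcMatching_mem_cvcEdges [Fintype V] {i : CVCMatchIndex V} (hi : i ∈ cvcMatchIndices A w) :
    cvcMatching i ∈ cvcEdges A w := by
  rw [mem_cvcEdges_iff]
  rcases i with v | ⟨e, _ | ⟨s, j⟩⟩
  · exact .pendant v
  · exact .hubs e (by simpa [cvcMatchIndices] using hi)
  · obtain ⟨he, hj⟩ : e ∈ A ∧ j < w e := by simpa [cvcMatchIndices] using hi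
    exact .middle e s j he hj

theorem mapsTo_cvcMatchIndex [Fintype V] :
    Set.MapsTo cvcMatchIndex (cvcVset A w) (cvcMatchIndices A w) := by
  intro u hu
  induction u using cvcV_cases <;> simp_all [cvcMatchIndex, cvcMatchIndices, cvcVset]

theorem cvcVset_finite [Finite V] : (cvcVset A w).Finite := by
  have := Fintype.ofFinite V
  refine ((cvcMatchIndices A w).finite_toSet.biUnion fun i _ =>
    Set.toFinite {(cvcMatching i).1, (cvcMatching i).2}).subset fun u hu => ?_
  exact Set.mem_biUnion (mapsTo_cvcMatchIndex hu) (eq_cvcMatching_fst_or_snd u)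

theorem cvcEdges_finite [Finite V] : (cvcEdges A w).Finite :=
  (cvcVset_finite.prod cvcVset_finite).subset fun _ hp => ⟨hp.1, hp.2.1⟩

end Matching

section Degree

variable {V : Type*} {A : Finset (V × V)} {w : V × V → ℕ} {e : V × V} {s b : Bool} {j : ℕ}

theorem ncard_incidentEdges_cvcHub_le :
    (incidentEdges (cvcEdges A w) (cvcHub e s)).ncard ≤ w e + 1 := by
  let inner (j : ℕ) : CVCV V × CVCV V := (cvcHub e s, cvcPath e s j (!s))
  have hsub : incidentEdges (cvcEdges A w) (cvcHub e s) ⊆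
      insert (cvcHub e false, cvcHub e true) (inner '' ↑(range (w e))) := by
    rintro p ⟨hpE, hp⟩
    cases mem_cvcEdges_iff.1 hpE with
    | hubs e' he =>
      obtain rfl : e' = e := by aesop
      exact .inl rfl
    | _ => simp_all [inner]
  calc
    _ ≤ (insert (cvcHub e false, cvcHub e true) (inner '' ↑(range (w e)))).ncard :=
      Set.ncard_le_ncard hsub (((finite_toSet _).image _).insert _)
    _ ≤ (inner '' ↑(range (w e))).ncard + 1 := Set.ncard_insert_le _ _
    _ ≤ (range (w e) : Set ℕ).ncard + 1 :=
      Nat.add_le_add_right (Set.ncard_image_le (finite_toSet _)) 1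
    _ = w e + 1 := by simp

theorem ncard_incidentEdges_cvcPath_le :
    (incidentEdges (cvcEdges A w) (cvcPath e s j b)).ncard ≤ 2 := by
  have hsub : incidentEdges (cvcEdges A w) (cvcPath e s j b) ⊆
      {(cvcPath e s j false, cvcPath e s j true),
        if b = s then cvcSpoke e s j else (cvcHub e s, cvcPath e s j (!s))} := by
    rintro p ⟨hpE, hp⟩
    cases mem_cvcEdges_iff.1 hpE with
    | pendant v => simp at hp
    | hubs e' he => simp at hp
    | middle e' s' j' he hj => aesop
    | inner e' s' j' he hj => cases s' <;> cases b <;> simp_all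
    | spoke e' s' j' he hj => cases s' <;> cases b <;> simp_all
  exact (Set.ncard_le_ncard hsub).trans ((Set.ncard_insert_le _ _).trans_eq (by simp))

end Degree

section PaidEdges

variable {V : Type*} {A : Finset (V × V)} {w : V × V → ℕ} {o : V × V → Bool} {v : V}

/-- The edges of `H` that the original vertex `v` pays for when `A` is oriented by `o`: its pendant
edge and, for each edge `e` of `G` directed out of `v`, the `w e` edges from `v` to the gadget
of `e`. -/
def cvcPaidEdges (A : Finset (V × V)) (w : V × V → ℕ) (o : V × V → Bool) (v : V) :
    Set (CVCV V × CVCV V) :=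
  insert (cvcOrig v, cvcPendant v)
    {p | ∃ e ∈ A, selectedEnd o e = v ∧ ∃ j < w e, p = cvcSpoke e (!o e) j}

theorem cvcPaidEdges_eq_insert_image [DecidableEq V] :
    cvcPaidEdges A w o v = insert (cvcOrig v, cvcPendant v)
      ((fun q : Σ _ : V × V, ℕ => cvcSpoke q.1 (!o q.1) q.2) ''
        ↑({e ∈ A | selectedEnd o e = v}.sigma fun e => range (w e))) := by
  ext p
  simp [cvcPaidEdges, and_assoc, eq_comm]

theorem cvcPaidEdges_finite : (cvcPaidEdges A w o v).Finite := by
  classical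
  rw [cvcPaidEdges_eq_insert_image]
  exact ((finite_toSet _).image _).insert _

theorem ncard_cvcPaidEdges [DecidableEq V] :
    (cvcPaidEdges A w o v).ncard = outWeight A w o v + 1 := by
  have hinj : Function.Injective fun q : Σ _ : V × V, ℕ => cvcSpoke q.1 (!o q.1) q.2 := by
    rintro ⟨e, j⟩ ⟨e', j'⟩ h
    simp_all
  rw [cvcPaidEdges_eq_insert_image,
    Set.ncard_insert_of_notMem (by simp) ((finite_toSet _).image _),
    Set.ncard_image_of_injective _ hinj, Set.ncard_coe_finset, card_sigma]
  simp [outWeight]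

end PaidEdges

section CoverToOrientation

variable {V : Type*} {A : Finset (V × V)} {w : V × V → ℕ} {t : V → ℕ} {S : Set (CVCV V)}
  {g : CVCV V × CVCV V → Bool} {e : V × V} {s : Bool} {j : ℕ} {v : V}

theorem CoversEdges.injOn_cvcMatchIndex [Fintype V] (hcov : CoversEdges (cvcEdges A w) S)
    (hS : S ⊆ cvcVset A w) (hcard : S.ncard ≤ Fintype.card V + ∑ e ∈ A, (2 * w e + 1)) :
    Set.InjOn cvcMatchIndex S :=
  hcov.injOn_of_ncard_le_card_matching (fun _ => cvcMatching_mem_cvcEdges)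
    cvcMatchIndex_cvcMatching_fst cvcMatchIndex_cvcMatching_snd (mapsTo_cvcMatchIndex.mono_left hS)
    (cvcVset_finite.subset hS) (card_cvcMatchIndices (A := A) ▸ hcard)

open Classical in
/-- The orientation of `G` read off a cover `S` of `H`: the edge `e` is directed from `e.1` to `e.2`
if `a_e` is missing in `S`. -/
noncomputable def coverOrientation (S : Set (CVCV V)) (e : V × V) : Bool :=
  decide (cvcHub e false ∉ S)

theorem cvcHub_coverOrientation_notMem (hinj : Set.InjOn cvcMatchIndex S) :
    cvcHub e (!coverOrientation S e) ∉ S := by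
  by_cases ha : cvcHub e false ∈ S
  · have hb : cvcHub e true ∉ S := fun hb => by simpa using hinj ha hb rfl
    simp [coverOrientation, ha, hb]
  · simp [coverOrientation, ha]

theorem CoversEdges.cvcPath_notMem (hcov : CoversEdges (cvcEdges A w) S)
    (hinj : Set.InjOn cvcMatchIndex S) (he : e ∈ A) (hj : j < w e) (hhub : cvcHub e s ∉ S) :
    cvcPath e s j s ∉ S := by
  intro houter
  have hinner : cvcPath e s j (!s) ∈ S :=
    (hcov _ (IsGadgetEdge.inner e s j he hj).mem_cvcEdges).resolve_left hhub
  have := hinj houter hinner rfl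
  cases s <;> simp at this

theorem IsCapacitatedCover.cvcPaidEdges_subset
    (h : IsCapacitatedCover (cvcEdges A w) (cvcCap w t) S g) (hinj : Set.InjOn cvcMatchIndex S)
    (hv : cvcOrig v ∈ S) :
    cvcPaidEdges A w (coverOrientation S) v ⊆ assignedEdges (cvcEdges A w) g (cvcOrig v) := by
  intro p hp
  rcases hp with rfl | ⟨e, he, rfl, j, hj, rfl⟩
  · have hpE := (IsGadgetEdge.pendant (A := A) (w := w) v).mem_cvcEdges
    have hpendant : cvcPendant v ∉ S := fun hpv => by simpa using hinj hv hpv rfl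
    exact ⟨hpE, h.selectedEnd_eq_fst hpE hpendant⟩
  · have hpE := (IsGadgetEdge.spoke e (!coverOrientation S e) j he hj).mem_cvcEdges
    have houter := h.coversEdges.cvcPath_notMem hinj he hj (cvcHub_coverOrientation_notMem hinj)
    exact ⟨hpE, (h.selectedEnd_eq_fst hpE houter).trans (congrArg cvcOrig cvcSideEnd_not)⟩

theorem CoversEdges.cvcOrig_mem (hcov : CoversEdges (cvcEdges A w) S)
    (hinj : Set.InjOn cvcMatchIndex S) (he : e ∈ A) (hw : w e ≠ 0) :
    cvcOrig (selectedEnd (coverOrientation S) e) ∈ S := by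
  have hpos : 0 < w e := Nat.pos_of_ne_zero hw
  have houter := hcov.cvcPath_notMem hinj he hpos (cvcHub_coverOrientation_notMem hinj)
  rw [← cvcSideEnd_not]
  exact (hcov _ (IsGadgetEdge.spoke e _ 0 he hpos).mem_cvcEdges).resolve_right houter

theorem IsCapacitatedCover.outWeight_coverOrientation_le [Finite V] [DecidableEq V]
    (h : IsCapacitatedCover (cvcEdges A w) (cvcCap w t) S g) (hinj : Set.InjOn cvcMatchIndex S)
    (v : V) : outWeight A w (coverOrientation S) v ≤ t v := by
  by_cases hv : cvcOrig v ∈ S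
  · have hfin : (assignedEdges (cvcEdges A w) g (cvcOrig v)).Finite :=
      cvcEdges_finite.subset fun _ hp => hp.1
    have : outWeight A w (coverOrientation S) v + 1 ≤ t v + 1 := calc
      _ = (cvcPaidEdges A w (coverOrientation S) v).ncard := ncard_cvcPaidEdges.symm
      _ ≤ (assignedEdges (cvcEdges A w) g (cvcOrig v)).ncard :=
        Set.ncard_le_ncard (h.cvcPaidEdges_subset hinj hv) hfin
      _ ≤ t v + 1 := h.ncard_assignedEdges_le _ hv
    exact Nat.le_of_add_le_add_right this
  · have hzero : outWeight A w (coverOrientation S) v = 0 := by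
      refine sum_eq_zero fun e he => ?_
      obtain ⟨heA, rfl⟩ := mem_filter.1 he
      by_contra hwe
      exact hv (h.coversEdges.cvcOrig_mem hinj heA hwe)
    exact hzero ▸ Nat.zero_le _

end CoverToOrientation

section OrientationToCover

variable {V : Type*} {A : Finset (V × V)} {w : V × V → ℕ} {t : V → ℕ} {o : V × V → Bool}
  {e : V × V} {s b : Bool} {j : ℕ} {v : V}

/-- The cover of `H` prescribed by the orientation `o`. It contains all original vertices and,
if `e` is directed from `x` to `y`, the hub on the side of `y`, the inner vertices of the paths on
the side of `x` and the outer vertices of the paths on the side of `y`. -/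
def orientationCover (A : Finset (V × V)) (w : V × V → ℕ) (o : V × V → Bool) : Set (CVCV V) :=
  {u | u ∈ cvcVset A w ∧
    match u with
    | Sum.inl (Sum.inl _) => True
    | Sum.inl (Sum.inr _) => False
    | Sum.inr (e, Sum.inl s) => s = o e
    | Sum.inr (e, Sum.inr (_, _, p)) => p = cond (o e) 1 0}

theorem cvcOrig_mem_orientationCover : cvcOrig v ∈ orientationCover A w o :=
  ⟨trivial, trivial⟩

theorem cvcPendant_notMem_orientationCover : cvcPendant v ∉ orientationCover A w o :=
  And.right

theorem cvcHub_mem_orientationCover_iff :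
    cvcHub e s ∈ orientationCover A w o ↔ e ∈ A ∧ s = o e :=
  Iff.rfl

theorem cvcPath_mem_orientationCover_iff :
    cvcPath e s j b ∈ orientationCover A w o ↔ (e ∈ A ∧ j < w e) ∧ b = o e := by
  cases h : o e <;> cases b <;> simp [orientationCover, cvcVset, h]

theorem orientationCover_subset_cvcVset : orientationCover A w o ⊆ cvcVset A w :=
  fun _ hu => hu.1

theorem injOn_cvcMatchIndex_orientationCover :
    Set.InjOn cvcMatchIndex (orientationCover A w o) := by
  intro u hu u' hu' h
  induction u using cvcV_cases <;> induction u' using cvcV_cases <;>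
    simp_all [cvcMatchIndex, orientationCover]

theorem ncard_orientationCover_le [Fintype V] :
    (orientationCover A w o).ncard ≤ Fintype.card V + ∑ e ∈ A, (2 * w e + 1) := by
  rw [← card_cvcMatchIndices, ← Set.ncard_coe_finset]
  exact Set.ncard_le_ncard_of_injOn cvcMatchIndex
    (fun _ hu => mapsTo_cvcMatchIndex (orientationCover_subset_cvcVset hu))
    injOn_cvcMatchIndex_orientationCover (finite_toSet _)

theorem coversEdges_orientationCover :
    CoversEdges (cvcEdges A w) (orientationCover A w o) := by
  intro p hp
  cases mem_cvcEdges_iff.1 hp with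
  | pendant v => exact .inl cvcOrig_mem_orientationCover
  | hubs e he => cases h : o e <;> simp [cvcHub_mem_orientationCover_iff, he, h]
  | middle e s j he hj => cases h : o e <;> simp [cvcPath_mem_orientationCover_iff, he, hj, h]
  | inner e s j he hj =>
    cases h : o e <;> cases s <;>
      simp [cvcHub_mem_orientationCover_iff, cvcPath_mem_orientationCover_iff, he, hj, h]
  | spoke e s j he hj => exact .inl cvcOrig_mem_orientationCover

theorem assignedEdges_orientationCover_subset_cvcPaidEdges :
    assignedEdges (cvcEdges A w) (sndAssignment (orientationCover A w o)) (cvcOrig v) ⊆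
      cvcPaidEdges A w o v := by
  rintro p ⟨hpE, hp⟩
  rw [selectedEnd_sndAssignment_eq_iff] at hp
  cases mem_cvcEdges_iff.1 hpE with
  | pendant v' =>
    obtain ⟨-, rfl⟩ : cvcPendant v' ∉ orientationCover A w o ∧ v' = v := by simpa using hp
    exact .inl rfl
  | hubs e he => simp at hp
  | middle e s j he hj => simp at hp
  | inner e s j he hj => simp at hp
  | spoke e s j he hj =>
    obtain ⟨hs, hv⟩ : cvcPath e s j s ∉ orientationCover A w o ∧ cvcSideEnd e s = v := by
      simpa using hp
    obtain rfl : s = !o e := by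
      rw [Bool.eq_not]
      exact fun hse => hs (cvcPath_mem_orientationCover_iff.2 ⟨⟨he, hj⟩, hse⟩)
    exact .inr ⟨e, he, cvcSideEnd_not.symm.trans hv, j, hj, rfl⟩

theorem isCapacitatedCover_orientationCover [Finite V] [DecidableEq V]
    (ho : ∀ v, outWeight A w o v ≤ t v) :
    IsCapacitatedCover (cvcEdges A w) (cvcCap w t) (orientationCover A w o)
      (sndAssignment (orientationCover A w o)) where
  selectedEnd_mem _ hp := coversEdges_orientationCover.selectedEnd_sndAssignment_mem hp
  ncard_assignedEdges_le u hu := by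
    have hdeg := ncard_assignedEdges_le_ncard_incidentEdges (cvcEdges_finite (A := A) (w := w))
      (g := sndAssignment (orientationCover A w o)) (v := u)
    induction u using cvcV_cases with
    | orig v => calc
        _ ≤ (cvcPaidEdges A w o v).ncard :=
          Set.ncard_le_ncard assignedEdges_orientationCover_subset_cvcPaidEdges
            cvcPaidEdges_finite
        _ = outWeight A w o v + 1 := ncard_cvcPaidEdges
        _ ≤ t v + 1 := Nat.add_le_add_right (ho v) 1
    | pendant v => exact absurd hu cvcPendant_notMem_orientationCover
    | hub e s => exact hdeg.trans ncard_incidentEdges_cvcHub_le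
    | path e s j b => exact hdeg.trans ncard_incidentEdges_cvcPath_le

end OrientationToCover

theorem cvc_gadget_iff_max_outdegree_orientation_general {V : Type*} [Fintype V] [DecidableEq V]
    (A : Finset (V × V)) (w : V × V → ℕ) (t : V → ℕ) :
    (∃ S g, S ⊆ cvcVset A w ∧ S.ncard ≤ Fintype.card V + ∑ e ∈ A, (2 * w e + 1) ∧
      IsCapacitatedCover (cvcEdges A w) (cvcCap w t) S g) ↔
    ∃ o, ∀ v, outWeight A w o v ≤ t v := by
  constructor
  · rintro ⟨S, g, hS, hcard, hcover⟩
    have hinj := hcover.coversEdges.injOn_cvcMatchIndex hS hcard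
    exact ⟨coverOrientation S, hcover.outWeight_coverOrientation_le hinj⟩
  · rintro ⟨o, ho⟩
    exact ⟨orientationCover A w o, sndAssignment (orientationCover A w o),
      orientationCover_subset_cvcVset, ncard_orientationCover_le,
      isCapacitatedCover_orientationCover ho⟩

theorem cvc_gadget_iff_max_outdegree_orientation
    {V : Type*} [Fintype V] [DecidableEq V]
    (A : Finset (V × V)) (w : V × V → ℕ) (t : V → ℕ)
    (hA : ∀ e ∈ A, e.1 ≠ e.2 ∧ (e.2, e.1) ∉ A)
    (hw : ∀ e ∈ A, 0 < w e) (ht : ∀ v, 0 < t v) :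
    (∃ (S : Set (CVCV V)) (g : CVCV V × CVCV V → Bool),
      S ⊆ cvcVset A w ∧
      S.ncard ≤ Fintype.card V + ∑ e ∈ A, (2 * w e + 1) ∧
      (∀ p ∈ cvcEdges A w, if g p = true then p.1 ∈ S else p.2 ∈ S) ∧
      (∀ v ∈ S,
        ({p | p ∈ cvcEdges A w ∧
          ((g p = true ∧ p.1 = v) ∨ (g p = false ∧ p.2 = v))}).ncard ≤ cvcCap w t v)) ↔
    (∃ o : V × V → Bool, ∀ v : V,
      (∑ e ∈ A.filter (fun e => (e.1 = v ∧ o e = true) ∨ (e.2 = v ∧ o e = false)), w e)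
        ≤ t v) := by
  simpa only [isCapacitatedCover_iff, selectedEnd_mem_iff, assignedEdges, selectedEnd_eq_iff,
    outWeight_eq_sum] using cvc_gadget_iff_max_outdegree_orientation_general A w t
end

section
/- Let I be a Binary CSP instance on a graph G = (V,E) with colour set 𝒞. Construct a List Colouring instance (H, L) as follows: the colours of H are the pairs (v,c) with v ∈ V and c ∈ C(v); each original vertex u ∈ V gets the list L(u) = {(u,c) : c ∈ C(u)}; every original edge of G is removed, and for each edge {u,v} ∈ E and each pair (a,b) ∈ (C(u) × C(v)) ∖ C(u,v), a new vertex z_{uv,a,b} is added, adjacent exactly to u and v, with list L(z_{uv,a,b}) = {(u,a),(v,b)}. Then I is satisfiable if and only if H has a proper list colouring, i.e., a function assigning to each vertex a colour from its list such that adjacent vertices receive different colours. -/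
/-!
Reduction from Binary CSP to List Colouring.

The input instance has vertex type `V`, colour type `C`, domains `dom`, an arc
set `A : Set (V × V)` listing each (undirected, loopless) edge exactly once as an
ordered pair, and constraints `con`.

The List Colouring instance `H` has vertex type `V ⊕ ((V × V) × C × C)`:
original vertices `Sum.inl u`, and, for each edge `e ∈ A` and each forbidden
pair `(a, b) ∈ (dom e.1 × dom e.2) ∖ con e.1 e.2`, the new vertex
`Sum.inr (e, a, b)`, adjacent exactly to `e.1` and `e.2` (original edges are
removed).  The colours of `H` are the pairs `(v, c)` with `c ∈ dom v`; the list
of `Sum.inl u` is `{(u, c) : c ∈ dom u}`, and the list of `Sum.inr (e, a, b)`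
is `{(e.1, a), (e.2, b)}`.
-/

/-- Vertices of the List Colouring instance. -/
abbrev LCV (V C : Type*) := V ⊕ ((V × V) × C × C)

/-- The vertex set of the List Colouring instance. -/
def lcVset {V C : Type*} (A : Set (V × V)) (dom : V → Set C)
    (con : V → V → Set (C × C)) : Set (LCV V C) :=
  {u | match u with
       | Sum.inl _ => True
       | Sum.inr (e, a, b) =>
          e ∈ A ∧ a ∈ dom e.1 ∧ b ∈ dom e.2 ∧ (a, b) ∉ con e.1 e.2}

/-- The adjacency relation of the List Colouring instance: each new vertex
`z_{uv,a,b}` is adjacent exactly to the two endpoints of its edge. -/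
def lcAdj {V C : Type*} : LCV V C → LCV V C → Prop := fun u u' =>
  match u, u' with
  | Sum.inl x, Sum.inr (e, _, _) => x = e.1 ∨ x = e.2
  | Sum.inr (e, _, _), Sum.inl x => x = e.1 ∨ x = e.2
  | _, _ => False

/-- The colour lists of the List Colouring instance. -/
def lcList {V C : Type*} [DecidableEq V] [DecidableEq C] (dom : V → Set C) :
    LCV V C → Set (V × C)
  | Sum.inl u => {q | q.1 = u ∧ q.2 ∈ dom u}
  | Sum.inr (e, a, b) => {(e.1, a), (e.2, b)}

/-!
Given `g : V → C`, colour each original vertex `v` by `(v, g v)`, a point of the graph of `g`.  A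
colour `q` is then available at a new vertex as soon as it lies off that graph, i.e.
`g q.1 ≠ q.2`.  The list `{(u, a), (v, b)}` of `z_{uv,a,b}` contains such a colour exactly when
`(g u, g v) ≠ (a, b)`, so the new vertices on `uv` can all be coloured precisely when `g` avoids
every forbidden pair of that edge.
-/

/-- Solutions of the Binary CSP instance with domains `dom` and one constraint from `con` for
each arc in `A`. -/
def IsCSPSolution {V C : Type*} (A : Set (V × V)) (dom : V → Set C) (con : V → V → Set (C × C))
    (g : V → C) : Prop :=
  (∀ v, g v ∈ dom v) ∧ ∀ e ∈ A, (g e.1, g e.2) ∈ con e.1 e.2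

/-- Proper list colourings, from the lists `L`, of the graph with vertex set `S` and adjacency
relation `adj`.  Colourings are total functions on the ambient type, unconstrained outside `S`. -/
def IsListColouring {W K : Type*} (S : Set W) (adj : W → W → Prop) (L : W → Set K)
    (h : W → K) : Prop :=
  (∀ u ∈ S, h u ∈ L u) ∧ ∀ u ∈ S, ∀ u' ∈ S, adj u u' → h u ≠ h u'

/-- The colouring of the List Colouring instance induced by an assignment `g` of the CSP.  At a new
vertex it prefers the colour `(e.1, a)`, and takes `(e.2, b)` only when `(e.1, a)` is already the
colour of `e.1`. -/
def lcExtend {V C : Type*} [DecidableEq C] (g : V → C) : LCV V C → V × C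
  | Sum.inl v => (v, g v)
  | Sum.inr (e, a, b) => if g e.1 = a then (e.2, b) else (e.1, a)

theorem ne_mk_apply_of_apply_fst_ne {V C : Type*} {g : V → C} {q : V × C} (hq : g q.1 ≠ q.2)
    (v : V) : q ≠ (v, g v) := by
  rintro rfl
  exact hq rfl

theorem apply_lcExtend_inr_fst_ne {V C : Type*} [DecidableEq C] {g : V → C} {e : V × V} {a b : C}
    (hab : (g e.1, g e.2) ≠ (a, b)) :
    g (lcExtend g (Sum.inr (e, a, b))).1 ≠ (lcExtend g (Sum.inr (e, a, b))).2 := by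
  by_cases ha : g e.1 = a
  · have hb : g e.2 ≠ b := fun hb => hab (Prod.ext ha hb)
    simpa [lcExtend, ha] using hb
  · simp [lcExtend, ha]

section Reduction

variable {V C : Type*} [DecidableEq V] [DecidableEq C] {A : Set (V × V)} {dom : V → Set C}
  {con : V → V → Set (C × C)}

theorem lcExtend_inr_mem_lcList (g : V → C) (e : V × V) (a b : C) :
    lcExtend g (Sum.inr (e, a, b)) ∈ lcList dom (Sum.inr (e, a, b)) := by
  by_cases ha : g e.1 = a <;> simp [lcExtend, lcList, ha]

theorem isListColouring_lc_iff {h : LCV V C → V × C} :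
    IsListColouring (lcVset A dom con) lcAdj (lcList dom) h ↔
      (∀ v, h (Sum.inl v) ∈ lcList dom (Sum.inl v)) ∧
        ∀ e a b, Sum.inr (e, a, b) ∈ lcVset A dom con →
          h (Sum.inr (e, a, b)) ∈ lcList dom (Sum.inr (e, a, b)) ∧
            h (Sum.inr (e, a, b)) ≠ h (Sum.inl e.1) ∧
            h (Sum.inr (e, a, b)) ≠ h (Sum.inl e.2) := by
  constructor
  · rintro ⟨hlist, hproper⟩
    exact ⟨fun v => hlist _ trivial, fun e a b hz => ⟨hlist _ hz,
      hproper _ hz _ trivial (Or.inl rfl), hproper _ hz _ trivial (Or.inr rfl)⟩⟩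
  · rintro ⟨horig, hnew⟩
    have hne : ∀ x e a b, Sum.inr (e, a, b) ∈ lcVset A dom con → x = e.1 ∨ x = e.2 →
        h (Sum.inr (e, a, b)) ≠ h (Sum.inl x) := by
      rintro x e a b hz (rfl | rfl)
      exacts [(hnew e a b hz).2.1, (hnew e a b hz).2.2]
    constructor
    · rintro (v | ⟨e, a, b⟩) hu
      exacts [horig v, (hnew e a b hu).1]
    · rintro (v | ⟨e, a, b⟩) hu (v' | ⟨e', a', b'⟩) hu' hadj
      exacts [hadj.elim, (hne v e' a' b' hu' hadj).symm, hne v' e a b hu hadj, hadj.elim]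

theorem IsCSPSolution.isListColouring_lcExtend {g : V → C} (hg : IsCSPSolution A dom con g) :
    IsListColouring (lcVset A dom con) lcAdj (lcList dom) (lcExtend g) := by
  refine isListColouring_lc_iff.2 ⟨fun v => ⟨rfl, hg.1 v⟩, ?_⟩
  rintro e a b ⟨he, -, -, hforbidden⟩
  have hab : (g e.1, g e.2) ≠ (a, b) := ne_of_mem_of_not_mem (hg.2 e he) hforbidden
  have hoff := apply_lcExtend_inr_fst_ne hab
  exact ⟨lcExtend_inr_mem_lcList g e a b, ne_mk_apply_of_apply_fst_ne hoff e.1,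
    ne_mk_apply_of_apply_fst_ne hoff e.2⟩

theorem IsListColouring.isCSPSolution_lc {h : LCV V C → V × C}
    (hh : IsListColouring (lcVset A dom con) lcAdj (lcList dom) h) :
    IsCSPSolution A dom con fun v => (h (Sum.inl v)).2 := by
  obtain ⟨horig, hnew⟩ := isListColouring_lc_iff.1 hh
  have hinl : ∀ v, h (Sum.inl v) = (v, (h (Sum.inl v)).2) := fun v => Prod.ext (horig v).1 rfl
  refine ⟨fun v => (horig v).2, fun e he => ?_⟩
  by_contra hforbidden
  obtain ⟨hmem, hne₁, hne₂⟩ := hnew e _ _ ⟨he, (horig e.1).2, (horig e.2).2, hforbidden⟩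
  rcases hmem with hz | hz
  · exact hne₁ (hz.trans (hinl e.1).symm)
  · exact hne₂ (hz.trans (hinl e.2).symm)

end Reduction

theorem csp_satisfiable_iff_list_colourable_general {V C : Type*} [DecidableEq V]
    [DecidableEq C] (A : Set (V × V)) (dom : V → Set C) (con : V → V → Set (C × C)) :
    (∃ g, IsCSPSolution A dom con g) ↔
      ∃ h, IsListColouring (lcVset A dom con) lcAdj (lcList dom) h :=
  ⟨fun ⟨g, hg⟩ => ⟨lcExtend g, hg.isListColouring_lcExtend⟩,
    fun ⟨_, hh⟩ => ⟨_, hh.isCSPSolution_lc⟩⟩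

theorem csp_satisfiable_iff_list_colourable
    {V C : Type*} [DecidableEq V] [DecidableEq C]
    (A : Set (V × V)) (hA : ∀ e ∈ A, e.1 ≠ e.2 ∧ (e.2, e.1) ∉ A)
    (dom : V → Set C) (con : V → V → Set (C × C)) :
    (∃ g : V → C, (∀ v, g v ∈ dom v) ∧
      ∀ e ∈ A, (g e.1, g e.2) ∈ con e.1 e.2) ↔
    (∃ h : LCV V C → V × C,
      (∀ u ∈ lcVset A dom con, h u ∈ lcList dom u) ∧
      ∀ u ∈ lcVset A dom con, ∀ u' ∈ lcVset A dom con,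
        lcAdj u u' → h u ≠ h u') :=
  csp_satisfiable_iff_list_colourable_general A dom con
end
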